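/- Let Ω ⊂ ℝ^N be a bounded domain, let x_0 = x ∈ Ω, let τ = inf{k ≥ 0 : X_k ∉ Ω} be the exit time from Ω, and let f : Ω → ℝ be a nonnegative bounded Borel measurable function, extended by 0 outside Ω. Then there exists a constant C > 0 depending only on N such that E[ ε² Σ_{i=0}^{τ−1} f(X_i) ] ≤ ( ε² + α E[ε² τ] ) · sup_Ω f + C (diam Ω + Λε) ( ∫_Ω f(y)^N dy )^{1/N}. -/

import Mathlib

open MeasureTheory Metric
open scoped ENNReal

noncomputable section

/-!
The measurable estimate reduces to a potential-theoretic one: it suffices to find `V` with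
`0 ≤ V ≤ C (diam D + Λ ε) ‖f‖_d` whose one-step mean drops enough, since then
`V (X i) + ε² f (X i)` decreases in expectation by `ε² f (X i)`, up to `ε² (1 - β) sup f`, while the
process stays in `D`. Such a `V` is a concave function on a large ball. Concavity makes the jumps of
mean zero harmless, so only the uniform part of the step has to gain, and what it must gain is
`ε² ⨍ f` over `B_ε(x)`. To this end one solves a discrete Monge–Ampère problem on an `ε / 2`-net
of `D`: the slopes supporting `V` at a node `p` have volume at least a multiple of
`∫ f ^ d` over `B_{2ε}(p)`. By Jensen they are not contained in a ball of radius comparable to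
`ε ⨍ f`, hence near any point within `ε / 2` of `p` some slope is far from a given supporting one,
and `V` lies below its tangent by a multiple of `ε² ⨍ f` on a fixed fraction of `B_ε(x)`. Only the
total volume of the slopes, which is controlled because the doubled balls overlap boundedly, limits
the height of `V`.
-/

section Averages

variable {α : Type*} [MeasurableSpace α] {μ : Measure α} {f : α → ℝ} {s : Set α}

theorem setAverage_pow_mul_measureReal_le (n : ℕ) (hs : μ s ≠ ∞) (hf0 : ∀ x, 0 ≤ f x)
    (hf : IntegrableOn f s μ) (hfn : IntegrableOn (fun x => f x ^ n) s μ) :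
    (⨍ x in s, f x ∂μ) ^ n * μ.real s ≤ ∫ x in s, f x ^ n ∂μ := by
  obtain hs0 | hs0 := eq_or_ne (μ s) 0
  · simp [measureReal_def, hs0, Measure.restrict_eq_zero.2 hs0]
  have measureReal_pos : 0 < μ.real s := ENNReal.toReal_pos hs0 hs
  have jensen : (⨍ x in s, f x ∂μ) ^ n ≤ ⨍ x in s, f x ^ n ∂μ :=
    (convexOn_pow n).map_set_average_le (by fun_prop) isClosed_Ici hs0 hs (ae_of_all _ hf0) hf hfn
  rwa [setAverage_eq _ (fun x => f x ^ n), smul_eq_mul, ← div_eq_inv_mul,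
    le_div_iff₀ measureReal_pos] at jensen

theorem integrable_of_bounded_of_forall_notMem (hs : μ s ≠ ∞) (hf : Measurable f) {M : ℝ}
    (hM : ∀ x, |f x| ≤ M) (hfs : ∀ x ∉ s, f x = 0) : Integrable f μ :=
  (integrableOn_iff_integrable_of_support_subset (Function.support_subset_iff'.2 hfs)).1 <|
    Measure.integrableOn_of_bounded hs hf.aestronglyMeasurable (ae_of_all _ hM)

open Classical in
theorem sum_setIntegral_le_of_card_le {κ : Type*} {t : Finset κ} {A : κ → Set α} {c : ℝ}
    (hA : ∀ k ∈ t, MeasurableSet (A k)) (hf : Integrable f μ) (hf0 : ∀ x, 0 ≤ f x)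
    (hc : ∀ x, ({k ∈ t | x ∈ A k}.card : ℝ) ≤ c) :
    ∑ k ∈ t, ∫ x in A k, f x ∂μ ≤ c * ∫ x, f x ∂μ := by
  calc ∑ k ∈ t, ∫ x in A k, f x ∂μ
      = ∫ x, ∑ k ∈ t, (A k).indicator f x ∂μ := by
        rw [integral_finsetSum _ fun k hk => hf.indicator (hA k hk)]
        exact Finset.sum_congr rfl fun k hk => (integral_indicator (hA k hk)).symm
    _ ≤ ∫ x, c * f x ∂μ := by
        refine integral_mono (integrable_finsetSum _ fun k hk => hf.indicator (hA k hk))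
          (hf.const_mul c) fun x => ?_
        simp only [Set.indicator_apply]
        rw [← Finset.sum_filter, Finset.sum_const, nsmul_eq_mul]
        exact mul_le_mul_of_nonneg_right (hc x) (hf0 x)
    _ = c * ∫ x, f x ∂μ := integral_const_mul c f

end Averages

section Nets

theorem exists_finset_separated_net {X : Type*} [PseudoMetricSpace X] {D : Set X}
    (hD : TotallyBounded D) {s : ℝ} (hs : 0 < s) :
    ∃ t : Finset X, ↑t ⊆ D ∧ (t : Set X).Pairwise (fun p q => s ≤ dist p q) ∧
      ∀ x ∈ D, ∃ p ∈ t, dist x p ≤ s := by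
  lift s to NNReal using hs.le
  obtain ⟨N, -, N_finite, N_cover⟩ :=
    exists_finite_isCover_of_totallyBounded (ε := s / 2) (half_pos (by exact_mod_cast hs)).ne' hD
  have packingNumber_ne_top : packingNumber s D ≠ ⊤ := by
    have := (packingNumber_two_mul_le_externalCoveringNumber (s / 2) D).trans
      N_cover.externalCoveringNumber_le_encard
    rw [mul_div_cancel₀ s two_ne_zero] at this
    exact (this.trans_lt N_finite.encard_lt_top).ne
  have net_finite : (maximalSeparatedSet s D).Finite := by
    rwa [← Set.encard_ne_top_iff, encard_maximalSeparatedSet packingNumber_ne_top]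
  refine ⟨net_finite.toFinset, ?_, ?_, fun x hx => ?_⟩
  · simpa using maximalSeparatedSet_subset
  · rw [net_finite.coe_toFinset]
    refine isSeparated_maximalSeparatedSet.mono' fun p q s_lt => ?_
    rw [edist_nndist, ENNReal.coe_lt_coe] at s_lt
    exact_mod_cast s_lt.le
  · obtain ⟨p, hp, hxp⟩ := isCover_maximalSeparatedSet packingNumber_ne_top hx
    refine ⟨p, net_finite.mem_toFinset.2 hp, ?_⟩
    exact (edist_le_ofReal hs.le).1 (hxp.trans_eq ENNReal.ofReal_coe_nnreal.symm)

end Nets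

section HaarBalls

variable {E : Type*} [NormedAddCommGroup E] [NormedSpace ℝ E] [FiniteDimensional ℝ E]

section

variable [MeasurableSpace E] (vol : Measure E) [vol.IsAddHaarMeasure]

theorem addHaar_real_unitBall_pos : 0 < vol.real (ball (0 : E) 1) :=
  ENNReal.toReal_pos (measure_ball_pos vol 0 one_pos).ne' measure_ball_lt_top.ne

variable [BorelSpace E]

theorem addHaar_real_ball (x : E) {r : ℝ} (hr : 0 < r) :
    vol.real (ball x r) = r ^ Module.finrank ℝ E * vol.real (ball (0 : E) 1) := by
  rw [measureReal_def, Measure.addHaar_ball_of_pos vol x hr, ENNReal.toReal_mul,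
    ENNReal.toReal_ofReal (by positivity), measureReal_def]

theorem addHaar_ball_lt_addHaar_ball_iff [Nontrivial E] (x y : E) {r s : ℝ} (hr : 0 ≤ r)
    (hs : 0 ≤ s) : vol (ball x r) < vol (ball y s) ↔ r < s := by
  rw [Measure.addHaar_ball vol x hr, Measure.addHaar_ball vol y hs,
    ENNReal.mul_lt_mul_iff_left (measure_ball_pos vol 0 one_pos).ne' measure_ball_lt_top.ne,
    ENNReal.ofReal_lt_ofReal_iff_of_nonneg (by positivity),
    pow_lt_pow_iff_left₀ hr hs Module.finrank_pos.ne']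

end

theorem card_le_of_separated_of_subset_ball {t : Finset E} {s ρ : ℝ} (hs : 0 < s) (hρ : 0 ≤ ρ)
    {y : E} (ht : (t : Set E) ⊆ ball y ρ)
    (hsep : (t : Set E).Pairwise fun p q => s ≤ dist p q) :
    (t.card : ℝ) ≤ ((2 * ρ + s) / s) ^ Module.finrank ℝ E := by
  borelize E
  let vol : Measure E := Measure.addHaar
  have small_balls_disjoint : (t : Set E).PairwiseDisjoint fun p => ball p (s / 2) :=
    fun p hp q hq hpq => ball_disjoint_ball (by linarith [hsep hp hq hpq])
  have small_balls_subset : ⋃ p ∈ t, ball p (s / 2) ⊆ ball y (ρ + s / 2) :=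
    Set.iUnion₂_subset fun p hp => ball_subset_ball' (by linarith [mem_ball.1 (ht hp)])
  have volume_le : t.card * vol.real (ball 0 (s / 2)) ≤ vol.real (ball y (ρ + s / 2)) := by
    calc t.card * vol.real (ball 0 (s / 2))
        = ∑ p ∈ t, vol.real (ball p (s / 2)) := by
          simp only [Measure.addHaar_real_ball_center, Finset.sum_const, nsmul_eq_mul]
      _ = vol.real (⋃ p ∈ t, ball p (s / 2)) :=
          (measureReal_biUnion_finset small_balls_disjoint fun _ _ => measurableSet_ball).symm
      _ ≤ vol.real (ball y (ρ + s / 2)) :=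
          measureReal_mono small_balls_subset measure_ball_lt_top.ne
  rw [addHaar_real_ball vol 0 (half_pos hs), addHaar_real_ball vol y (by positivity), ← mul_assoc,
    mul_le_mul_iff_left₀ (addHaar_real_unitBall_pos vol), ← le_div_iff₀ (by positivity),
    ← div_pow] at volume_le
  have radius_ratio : (ρ + s / 2) / (s / 2) = (2 * ρ + s) / s := by field_simp
  rwa [radius_ratio] at volume_le

theorem sum_setIntegral_ball_le [MeasurableSpace E] [BorelSpace E] {μ : Measure E} {t : Finset E}
    {s ρ : ℝ} (hs : 0 < s) (hρ : 0 ≤ ρ) (hsep : (t : Set E).Pairwise fun p q => s ≤ dist p q)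
    {F : E → ℝ} (hF : Integrable F μ) (hF0 : ∀ y, 0 ≤ F y) :
    ∑ p ∈ t, ∫ y in ball p ρ, F y ∂μ ≤
      ((2 * ρ + s) / s) ^ Module.finrank ℝ E * ∫ y, F y ∂μ := by
  classical
  refine sum_setIntegral_le_of_card_le (fun _ _ => measurableSet_ball) hF hF0 fun y => ?_
  refine card_le_of_separated_of_subset_ball hs hρ (y := y) (fun p hp => ?_)
    (hsep.mono (Finset.coe_subset.2 (Finset.filter_subset _ t)))
  rw [mem_ball_comm]
  exact (Finset.mem_filter.1 hp).2

end HaarBalls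

variable {E ι : Type*} [NormedAddCommGroup E] [InnerProductSpace ℝ E]

section Haar

variable [FiniteDimensional ℝ E] [MeasurableSpace E] [BorelSpace E]
  (vol : Measure E) [vol.IsAddHaarMeasure]

theorem addHaar_hyperplane {w : E} (hw : w ≠ 0) (c : ℝ) : vol {p | inner ℝ p w = c} = 0 := by
  let hyperplane : AffineSubspace ℝ E :=
    (AffineSubspace.mk' c (⊥ : Submodule ℝ ℝ)).comap (innerₛₗ ℝ w).toAffineMap
  have coe_hyperplane : (hyperplane : Set E) = {p | inner ℝ p w = c} := by
    ext p
    simp [hyperplane, sub_eq_zero, real_inner_comm]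
  rw [← coe_hyperplane]
  refine Measure.addHaar_affineSubspace vol hyperplane fun hyperplane_eq_top => hw ?_
  have mem_hyperplane (p : E) : inner ℝ p w = c := by
    rw [hyperplane_eq_top, AffineSubspace.top_coe] at coe_hyperplane
    exact coe_hyperplane.subset (Set.mem_univ p)
  have inner_self_eq_inner_zero : inner ℝ w w = inner ℝ 0 w :=
    (mem_hyperplane w).trans (mem_hyperplane 0).symm
  rwa [inner_zero_left, inner_self_eq_zero] at inner_self_eq_inner_zero

end Haar

section StrictSlopes

/-- The slopes `p` for which the affine function of slope `p` and value `h i` at the node `P i` lies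
strictly above every other height `h j` and is positive on the closed ball of radius `R` around
`z`. -/
def strictSlopes (z : E) (R : ℝ) (P : ι → E) (h : ι → ℝ) (i : ι) : Set E :=
  {p | R * ‖p‖ < h i + inner ℝ p (z - P i) ∧ ∀ j ≠ i, h j < h i + inner ℝ p (P j - P i)}

/-- The slopes of the affine functions that touch the height `h i` at the node `P i`, lie above all
the other heights and are nonnegative on `K`: the superdifferential at `P i` of the concave envelope
of `h` over `K`. -/
def contactSlopes (K : Set E) (P : ι → E) (h : ι → ℝ) (i : ι) : Set E :=
  {p | (∀ y ∈ K, 0 ≤ h i + inner ℝ p (y - P i)) ∧ ∀ j, h j ≤ h i + inner ℝ p (P j - P i)}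

variable {z : E} {R : ℝ} {P : ι → E}

theorem strictSlopes_subset {h h' : ι → ℝ} {i : ι} (hi : h i ≤ h' i)
    (hj : ∀ j ≠ i, h' j ≤ h j) : strictSlopes z R P h i ⊆ strictSlopes z R P h' i :=
  fun _ hp => ⟨by linarith [hp.1], fun j hji => by linarith [hp.2 j hji, hj j hji]⟩

theorem mem_strictSlopes_update [DecidableEq ι] {h : ι → ℝ} {i : ι} {t : ℝ} {p : E} :
    p ∈ strictSlopes z R P (Function.update h i t) i ↔
      R * ‖p‖ - inner ℝ p (z - P i) < t ∧ ∀ j ≠ i, h j - inner ℝ p (P j - P i) < t := by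
  simp +contextual only [strictSlopes, Set.mem_ofPred_eq, Function.update_self, ne_eq,
    not_false_eq_true, Function.update_of_ne, sub_lt_iff_lt_add]

theorem monotone_strictSlopes_update [DecidableEq ι] (h : ι → ℝ) (i : ι) :
    Monotone fun t => strictSlopes z R P (Function.update h i t) i :=
  fun _ _ hst => strictSlopes_subset (by simpa using hst) fun j hj => by simp [hj]

theorem strictSlopes_subset_iUnion_update [Finite ι] [DecidableEq ι] (h : ι → ℝ) (i : ι)
    {u : ℕ → ℝ} (hu : Filter.Tendsto u Filter.atTop (nhds (h i))) :
    strictSlopes z R P h i ⊆ ⋃ n, strictSlopes z R P (Function.update h i (u n)) i := by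
  intro p hp
  rw [← Function.update_eq_self i h, mem_strictSlopes_update] at hp
  have eventually_mem : ∀ᶠ n in Filter.atTop,
      p ∈ strictSlopes z R P (Function.update h i (u n)) i := by
    simp only [mem_strictSlopes_update, Filter.eventually_and, Filter.eventually_all]
    exact ⟨hu.eventually_const_lt hp.1, fun j hj => hu.eventually_const_lt (hp.2 j hj)⟩
  exact Set.mem_iUnion.2 eventually_mem.exists

theorem iInter_strictSlopes_update_subset [DecidableEq ι] (h : ι → ℝ) (i : ι) {u : ℕ → ℝ}
    (hu : Filter.Tendsto u Filter.atTop (nhds (h i))) :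
    ⋂ n, strictSlopes z R P (Function.update h i (u n)) i ⊆
      contactSlopes (closedBall z R) P h i := by
  intro p hp
  simp only [Set.mem_iInter, mem_strictSlopes_update] at hp
  refine ⟨fun y hy => ?_, fun j => ?_⟩
  · have boundary_bound : R * ‖p‖ - inner ℝ p (z - P i) ≤ h i :=
      ge_of_tendsto' hu fun n => (hp n).1.le
    have inner_bound : inner ℝ p (z - y) ≤ R * ‖p‖ := by
      rw [mul_comm]
      refine (real_inner_le_norm p (z - y)).trans ?_
      gcongr
      rwa [← dist_eq_norm, dist_comm]
    simp only [inner_sub_right] at boundary_bound inner_bound ⊢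
    linarith
  · obtain rfl | hj := eq_or_ne j i
    · simp
    · rw [← sub_le_iff_le_add]
      exact ge_of_tendsto' hu fun n => ((hp n).2 j hj).le

theorem strictSlopes_zero (hP : ∀ i, dist (P i) z ≤ R) (i : ι) : strictSlopes z R P 0 i = ∅ := by
  refine Set.eq_empty_of_forall_notMem fun p hp => hp.1.not_ge ?_
  rw [Pi.zero_apply, zero_add, mul_comm]
  refine (real_inner_le_norm p (z - P i)).trans ?_
  gcongr
  rw [← dist_eq_norm, dist_comm]
  exact hP i

theorem strictSlopes_subset_ball (hP : ∀ i, dist (P i) z < R) (h : ι → ℝ) (i : ι) :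
    strictSlopes z R P h i ⊆ ball 0 (h i / (R - dist (P i) z)) := by
  intro p hp
  rw [mem_ball_zero_iff, lt_div_iff₀ (sub_pos.2 (hP i)), mul_sub, dist_comm, dist_eq_norm]
  linarith [hp.1, real_inner_le_norm p (z - P i), mul_comm R ‖p‖]

end StrictSlopes

section DiscreteMongeAmpere

variable [MeasurableSpace E] (vol : Measure E) {z : E} {R : ℝ} {P : ι → E} {m : ι → ℝ≥0∞}

/-- The subsolutions of the discrete Monge–Ampère problem with masses `m i` at the nodes `P i`:
the heights whose slopes at `P i` have measure at most `m i`. -/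
def mongeAmpereSubsolutions (z : E) (R : ℝ) (P : ι → E) (m : ι → ℝ≥0∞) : Set (ι → ℝ) :=
  {h | ∀ i, vol (strictSlopes z R P h i) ≤ m i}

theorem zero_mem_mongeAmpereSubsolutions (hPR : ∀ i, dist (P i) z ≤ R) :
    0 ∈ mongeAmpereSubsolutions vol z R P m := fun i => by
  rw [strictSlopes_zero hPR, measure_empty]
  exact zero_le

theorem isLUB_mem_mongeAmpereSubsolutions [Finite ι] {h : ι → ℝ}
    (hh : IsLUB (mongeAmpereSubsolutions vol z R P m) h) :
    h ∈ mongeAmpereSubsolutions vol z R P m := by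
  classical
  intro i
  obtain ⟨u, u_strictMono, u_lt, u_tendsto⟩ := exists_seq_strictMono_tendsto (h i)
  have slopes_monotone : Monotone fun n => strictSlopes z R P (Function.update h i (u n)) i :=
    (monotone_strictSlopes_update h i).comp u_strictMono.monotone
  refine (measure_mono (strictSlopes_subset_iUnion_update h i u_tendsto)).trans ?_
  rw [slopes_monotone.measure_iUnion]
  refine iSup_le fun n => ?_
  obtain ⟨_, ⟨h', h'_mem, rfl⟩, u_lt_h'⟩ := (lt_isLUB_iff (isLUB_pi.1 hh i)).1 (u_lt n)
  refine (measure_mono (strictSlopes_subset ?_ fun j hj => ?_)).trans (h'_mem i)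
  · simpa using u_lt_h'.le
  · simpa [hj] using hh.1 h'_mem j

variable [FiniteDimensional ℝ E] [BorelSpace E]

theorem measurableSet_strictSlopes [Countable ι] (h : ι → ℝ) (i : ι) :
    MeasurableSet (strictSlopes z R P h i) := by
  simp only [strictSlopes, Set.ofPred_and, Set.ofPred_forall]
  exact (measurableSet_lt (by fun_prop) (by fun_prop)).inter <|
    MeasurableSet.iInter fun j => MeasurableSet.iInter fun _ =>
      measurableSet_lt (by fun_prop) (by fun_prop)

variable [vol.IsAddHaarMeasure]

theorem addHaar_ball_le_sum_strictSlopes [Fintype ι] (hP : Function.Injective P)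
    (hPR : ∀ i, dist (P i) z < R) (h : ι → ℝ) (i : ι) :
    vol (ball 0 (h i / (2 * R))) ≤ ∑ j, vol (strictSlopes z R P h j) := by
  let ties : Set E := ⋃ j, ⋃ k, ⋃ _ : j ≠ k, {p | inner ℝ p (P j - P k) = h j - h k}
  have ties_null : vol ties = 0 :=
    measure_iUnion_null fun j => measure_iUnion_null fun k => measure_iUnion_null fun hjk =>
      addHaar_hyperplane vol (sub_ne_zero.2 (hP.ne hjk)) _
  have ball_subset : ball (0 : E) (h i / (2 * R)) ⊆ (⋃ j, strictSlopes z R P h j) ∪ ties := by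
    intro p hp
    have R_pos : 0 < R := dist_nonneg.trans_lt (hPR i)
    rw [mem_ball_zero_iff, lt_div_iff₀ (by positivity)] at hp
    have : Nonempty ι := ⟨i⟩
    obtain ⟨j, hj⟩ := Finite.exists_max fun j => h j - inner ℝ p (P j)
    have boundary_lt : R * ‖p‖ < h j + inner ℝ p (z - P j) := by
      have inner_le : inner ℝ p (P i - z) ≤ ‖p‖ * R := by
        refine (real_inner_le_norm p (P i - z)).trans ?_
        gcongr
        exact (dist_eq_norm (P i) z).symm.trans_le (hPR i).le
      rw [inner_sub_right] at inner_le ⊢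
      linarith [hj i]
    by_cases j_strict_max : ∀ k ≠ j, h k - inner ℝ p (P k) < h j - inner ℝ p (P j)
    · refine Or.inl (Set.mem_iUnion.2 ⟨j, boundary_lt, fun k hkj => ?_⟩)
      rw [inner_sub_right]
      linarith [j_strict_max k hkj]
    · push Not at j_strict_max
      obtain ⟨k, hkj, hk⟩ := j_strict_max
      refine Or.inr (Set.mem_iUnion₂.2 ⟨j, k, Set.mem_iUnion.2 ⟨hkj.symm, ?_⟩⟩)
      rw [Set.mem_ofPred_eq, inner_sub_right]
      linarith [hj k]
  calc vol (ball 0 (h i / (2 * R)))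
      ≤ vol (⋃ j, strictSlopes z R P h j) + vol ties :=
        (measure_mono ball_subset).trans (measure_union_le _ _)
    _ ≤ ∑ j, vol (strictSlopes z R P h j) := by
        rw [ties_null, add_zero]
        exact measure_iUnion_fintype_le _ _

theorem le_of_mem_mongeAmpereSubsolutions [Nontrivial E] [Fintype ι] (hP : Function.Injective P)
    (hPR : ∀ i, dist (P i) z < R) {ρ : ℝ} (hρ : 0 ≤ ρ) (hm : ∑ i, m i ≤ vol (ball 0 ρ))
    {h : ι → ℝ} (hh : h ∈ mongeAmpereSubsolutions vol z R P m) (i : ι) : h i ≤ 2 * R * ρ := by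
  have R_pos : 0 < R := dist_nonneg.trans_lt (hPR i)
  by_contra! height_gt
  have radius_lt : ρ < h i / (2 * R) := by
    rwa [lt_div_iff₀ (by positivity), mul_comm]
  refine ((addHaar_ball_lt_addHaar_ball_iff vol 0 0 hρ (hρ.trans radius_lt.le)).2
    radius_lt).not_ge ?_
  calc vol (ball 0 (h i / (2 * R)))
      ≤ ∑ j, vol (strictSlopes z R P h j) := addHaar_ball_le_sum_strictSlopes vol hP hPR h i
    _ ≤ ∑ j, m j := Finset.sum_le_sum fun j _ => hh j
    _ ≤ vol (ball 0 ρ) := hm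

theorem le_addHaar_contactSlopes [Finite ι] (hPR : ∀ i, dist (P i) z < R) {h : ι → ℝ}
    (hh : IsGreatest (mongeAmpereSubsolutions vol z R P m) h) (i : ι) :
    m i ≤ vol (contactSlopes (closedBall z R) P h i) := by
  classical
  obtain ⟨u, u_strictAnti, u_gt, u_tendsto⟩ := exists_seq_strictAnti_tendsto (h i)
  have mass_le (n : ℕ) : m i ≤ vol (strictSlopes z R P (Function.update h i (u n)) i) := by
    by_contra! mass_gt
    have raised_mem : Function.update h i (u n) ∈ mongeAmpereSubsolutions vol z R P m := by
      intro j
      obtain rfl | hj := eq_or_ne j i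
      · exact mass_gt.le
      · refine (measure_mono (strictSlopes_subset (by simp [hj]) fun k _ => ?_)).trans (hh.1 j)
        exact (le_update_self_iff.2 (u_gt n).le) k
    have := hh.2 raised_mem i
    rw [Function.update_self] at this
    exact this.not_gt (u_gt n)
  have slopes_antitone : Antitone fun n => strictSlopes z R P (Function.update h i (u n)) i :=
    (monotone_strictSlopes_update h i).comp_antitone u_strictAnti.antitone
  refine le_trans ?_ (measure_mono (iInter_strictSlopes_update_subset h i u_tendsto))
  rw [slopes_antitone.measure_iInter
    (fun n => (measurableSet_strictSlopes _ i).nullMeasurableSet)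
    ⟨0, ((measure_mono (strictSlopes_subset_ball hPR _ i)).trans_lt measure_ball_lt_top).ne⟩]
  exact le_iInf mass_le

/-- Perron's method: the supremum of the subsolutions is the largest one, so raising any single
height overshoots its mass, which leaves at least the prescribed mass in the limit. -/
theorem exists_le_addHaar_contactSlopes [Nontrivial E] [Fintype ι] (hP : Function.Injective P)
    (hPR : ∀ i, dist (P i) z < R) {ρ : ℝ} (hρ : 0 ≤ ρ) (hm : ∑ i, m i ≤ vol (ball 0 ρ)) :
    ∃ h : ι → ℝ, (∀ i, h i ≤ 2 * R * ρ) ∧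
      ∀ i, m i ≤ vol (contactSlopes (closedBall z R) P h i) := by
  have bddAbove : BddAbove (mongeAmpereSubsolutions vol z R P m) :=
    ⟨fun _ => 2 * R * ρ, fun _ hh => le_of_mem_mongeAmpereSubsolutions vol hP hPR hρ hm hh⟩
  have isLUB_sSup := isLUB_csSup
    ⟨0, zero_mem_mongeAmpereSubsolutions vol (m := m) fun i => (hPR i).le⟩ bddAbove
  have sSup_mem := isLUB_mem_mongeAmpereSubsolutions vol isLUB_sSup
  exact ⟨_, le_of_mem_mongeAmpereSubsolutions vol hP hPR hρ hm sSup_mem,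
    le_addHaar_contactSlopes vol hPR ⟨sSup_mem, isLUB_sSup.1⟩⟩

end DiscreteMongeAmpere

section ConcaveEnvelope

/-- The affine functions `y ↦ ⟪a.1, y⟫ + a.2` that are nonnegative on `K` and take a value of at
least `h i` at every node `P i`. -/
def affineMajorants (K : Set E) (P : ι → E) (h : ι → ℝ) : Set (E × ℝ) :=
  {a | (∀ y ∈ K, 0 ≤ inner ℝ a.1 y + a.2) ∧ ∀ i, h i ≤ inner ℝ a.1 (P i) + a.2}

/-- On `K`, the smallest nonnegative concave upper envelope of the heights `h i` at the nodes `P i`.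
The majorants are truncated at `0` because they may be negative off `K`. -/
def concaveEnvelope (K : Set E) (P : ι → E) (h : ι → ℝ) (y : E) : ℝ :=
  ⨅ a : affineMajorants K P h, max 0 (inner ℝ a.1.1 y + a.1.2)

variable {K : Set E} {P : ι → E} {h : ι → ℝ}

theorem bddBelow_range_truncated_majorants (y : E) :
    BddBelow (Set.range fun a : affineMajorants K P h => max 0 (inner ℝ a.1.1 y + a.1.2)) :=
  ⟨0, Set.forall_mem_range.2 fun _ => le_max_left _ _⟩

theorem concaveEnvelope_nonneg (y : E) : 0 ≤ concaveEnvelope K P h y :=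
  Real.iInf_nonneg fun _ => le_max_left _ _

theorem concaveEnvelope_le_max {a : E × ℝ} (ha : a ∈ affineMajorants K P h) (y : E) :
    concaveEnvelope K P h y ≤ max 0 (inner ℝ a.1 y + a.2) :=
  ciInf_le (bddBelow_range_truncated_majorants y) ⟨a, ha⟩

theorem concaveEnvelope_le_of_mem {a : E × ℝ} (ha : a ∈ affineMajorants K P h) {y : E}
    (hy : y ∈ K) : concaveEnvelope K P h y ≤ inner ℝ a.1 y + a.2 :=
  (concaveEnvelope_le_max ha y).trans_eq (max_eq_right (ha.1 y hy))

theorem zero_prodMk_mem_affineMajorants {B : ℝ} (hB : 0 ≤ B) (hhB : ∀ i, h i ≤ B) :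
    ((0 : E), B) ∈ affineMajorants K P h := by
  simpa [affineMajorants, hB] using hhB

theorem concaveEnvelope_le {B : ℝ} (hB : 0 ≤ B) (hhB : ∀ i, h i ≤ B) (y : E) :
    concaveEnvelope K P h y ≤ B := by
  simpa [hB] using concaveEnvelope_le_max (K := K) (zero_prodMk_mem_affineMajorants hB hhB) y

theorem exists_affineMajorant_lt (hne : (affineMajorants K P h).Nonempty) (x : E) {η : ℝ}
    (hη : 0 < η) :
    ∃ a ∈ affineMajorants K P h, inner ℝ a.1 x + a.2 < concaveEnvelope K P h x + η := by
  have := hne.to_subtype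
  obtain ⟨a, ha⟩ := exists_lt_of_ciInf_lt (lt_add_of_pos_right (concaveEnvelope K P h x) hη)
  exact ⟨a, a.2, (le_max_right _ _).trans_lt ha⟩

theorem mem_affineMajorants_of_mem_contactSlopes {i : ι} {p : E} (hp : p ∈ contactSlopes K P h i) :
    (p, h i - inner ℝ p (P i)) ∈ affineMajorants K P h := by
  simp only [contactSlopes, inner_sub_right, Set.mem_ofPred_eq] at hp
  exact ⟨fun y hy => by linarith [hp.1 y hy], fun j => by linarith [hp.2 j]⟩

theorem add_smul_mem_closedBall {x z v : E} {r Λ ε : ℝ} (hε : 0 ≤ ε) (hx : dist x z ≤ r)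
    (hv : ‖v‖ ≤ Λ) : x + ε • v ∈ closedBall z (r + Λ * ε) := by
  have dist_le : dist (x + ε • v) x ≤ Λ * ε := by
    rw [dist_self_add_left, norm_smul, Real.norm_of_nonneg hε, mul_comm]
    gcongr
  exact mem_closedBall.2 (by linarith [dist_triangle (x + ε • v) x z])

theorem dist_add_smul_le (x q : E) {δ : ℝ} (hδ : 0 ≤ δ) :
    dist (x + (2 * δ / ‖q‖) • q) x ≤ 2 * δ := by
  rw [dist_self_add_left, norm_smul, norm_div, norm_norm, Real.norm_of_nonneg (by positivity)]
  obtain hq | hq := eq_or_ne ‖q‖ 0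
  · simpa [hq] using hδ
  · rw [div_mul_cancel₀ _ hq]

theorem mul_norm_le_inner_of_mem_ball {x q y : E} {δ : ℝ}
    (hy : y ∈ ball (x + (2 * δ / ‖q‖) • q) δ) : δ * ‖q‖ ≤ inner ℝ q (y - x) := by
  set w := x + (2 * δ / ‖q‖) • q with w_def
  have inner_center : inner ℝ q (w - x) = 2 * δ * ‖q‖ := by
    rw [w_def, add_sub_cancel_left, inner_smul_right, real_inner_self_eq_norm_sq]
    obtain hq | hq := eq_or_ne ‖q‖ 0
    · simp [hq]
    · field_simp
  have inner_offset : inner ℝ q (w - y) ≤ ‖q‖ * δ := by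
    refine (real_inner_le_norm q (w - y)).trans ?_
    gcongr
    rw [← dist_eq_norm, dist_comm]
    exact (mem_ball.1 hy).le
  simp only [inner_sub_right] at inner_center inner_offset ⊢
  linarith

variable [MeasurableSpace E] [BorelSpace E]

theorem measurable_concaveEnvelope : Measurable (concaveEnvelope K P h) :=
  (upperSemicontinuous_ciInf bddBelow_range_truncated_majorants fun _ =>
    Continuous.upperSemicontinuous (by fun_prop)).measurable

theorem exists_le_dist_of_addHaar_ball_lt {F : Type*} [NormedAddCommGroup F] [MeasurableSpace F]
    [BorelSpace F] (vol : Measure F) [vol.IsAddHaarMeasure] {s : ℝ} {S : Set F}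
    (hS : vol (ball 0 s) < vol S) (x : F) : ∃ p ∈ S, s ≤ dist p x := by
  by_contra! S_subset
  refine hS.not_ge ((measure_mono (t := ball x s) S_subset).trans_eq ?_)
  exact Measure.addHaar_ball_center vol x s

/-- If the contact slopes at `P i` fill more than a ball of radius `s`, one of them is at distance
at least `s` from the slope of `a`; moving from `P i` in the direction of the difference separates
the two majorants. -/
theorem exists_ball_concaveEnvelope_le (vol : Measure E) [vol.IsAddHaarMeasure] {a : E × ℝ}
    (ha : a ∈ affineMajorants K P h) {i : ι} {s δ : ℝ} (hδ : 0 ≤ δ)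
    (hs : 0 < s → vol (ball 0 s) < vol (contactSlopes K P h i)) :
    ∃ w, dist w (P i) ≤ 2 * δ ∧
      ∀ y ∈ ball w δ, y ∈ K → concaveEnvelope K P h y ≤ inner ℝ a.1 y + a.2 - s * δ := by
  obtain s_nonpos | s_pos := le_or_gt s 0
  · refine ⟨P i, by simpa using hδ, fun y _ hyK => (concaveEnvelope_le_of_mem ha hyK).trans ?_⟩
    linarith [mul_nonpos_of_nonpos_of_nonneg s_nonpos hδ]
  obtain ⟨p, hp, s_le⟩ := exists_le_dist_of_addHaar_ball_lt vol (hs s_pos) a.1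
  rw [dist_comm, dist_eq_norm] at s_le
  refine ⟨P i + (2 * δ / ‖a.1 - p‖) • (a.1 - p), dist_add_smul_le (P i) _ hδ, fun y hy hyK => ?_⟩
  have slope_gap : s * δ ≤ inner ℝ (a.1 - p) (y - P i) :=
    (by gcongr : s * δ ≤ ‖a.1 - p‖ * δ).trans
      ((mul_comm _ _).trans_le (mul_norm_le_inner_of_mem_ball hy))
  have envelope_le := concaveEnvelope_le_of_mem (mem_affineMajorants_of_mem_contactSlopes hp) hyK
  simp only [inner_sub_left, inner_sub_right] at slope_gap
  linarith [ha.2 i]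

end ConcaveEnvelope

section BallAverages

variable [FiniteDimensional ℝ E] [MeasurableSpace E] [BorelSpace E] (vol : Measure E)
  [vol.IsAddHaarMeasure]

theorem integrableOn_ball_of_continuous {g : E → ℝ} (hg : Continuous g) (x : E) (r : ℝ) :
    IntegrableOn g (ball x r) vol :=
  (hg.continuousOn.integrableOn_compact (isCompact_closedBall x r)).mono_set
    ball_subset_closedBall

theorem setIntegral_ball_inner_sub (k x : E) (ε : ℝ) :
    ∫ y in ball x ε, inner ℝ k (y - x) ∂vol = 0 := by
  let φ : E → ℝ := (ball 0 ε).indicator fun v => inner ℝ k v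
  have odd (v : E) : φ (-v) = -φ v := by
    by_cases hv : ‖v‖ < ε <;> simp [φ, hv]
  have eq_neg : ∫ v, φ v ∂vol = -∫ v, φ v ∂vol := by
    rw [← integral_neg, ← integral_neg_eq_self]
    simp only [odd]
  calc ∫ y in ball x ε, inner ℝ k (y - x) ∂vol
      = ∫ y, φ (y - x) ∂vol := by
        rw [← integral_indicator measurableSet_ball]
        congr 1 with y
        simp [φ, Set.indicator, dist_eq_norm]
    _ = ∫ v, φ v ∂vol := integral_sub_right_eq_self φ x
    _ = 0 := self_eq_neg.1 eq_neg

theorem setIntegral_ball_affine (k x : E) (b ε : ℝ) :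
    ∫ y in ball x ε, (inner ℝ k y + b) ∂vol = (inner ℝ k x + b) * vol.real (ball x ε) := by
  have integrable_inner : IntegrableOn (fun y => inner ℝ k (y - x)) (ball x ε) vol :=
    integrableOn_ball_of_continuous vol (by fun_prop) x ε
  calc ∫ y in ball x ε, (inner ℝ k y + b) ∂vol
      = ∫ y in ball x ε, (inner ℝ k (y - x) + (inner ℝ k x + b)) ∂vol := by
        congr 1 with y
        rw [inner_sub_right]
        ring
    _ = (inner ℝ k x + b) * vol.real (ball x ε) := by
        rw [integral_add integrable_inner (integrableOn_const measure_ball_lt_top.ne),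
          setIntegral_ball_inner_sub, setIntegral_const, zero_add, smul_eq_mul, mul_comm]

theorem setAverage_ball_le_sub {g : E → ℝ} {k x w : E} {b s δ ε : ℝ} (hδ : 0 < δ) (hε : 0 < ε)
    (hsub : ball w δ ⊆ ball x ε) (hg : IntegrableOn g (ball x ε) vol)
    (hle : ∀ y ∈ ball x ε, g y ≤ inner ℝ k y + b)
    (hle_sub : ∀ y ∈ ball w δ, g y ≤ inner ℝ k y + b - s) :
    ⨍ y in ball x ε, g y ∂vol ≤ inner ℝ k x + b - s * (δ / ε) ^ Module.finrank ℝ E := by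
  have integrable_affine : IntegrableOn (fun y => inner ℝ k y + b) (ball x ε) vol :=
    integrableOn_ball_of_continuous vol (by fun_prop) x ε
  have integrable_indicator : IntegrableOn ((ball w δ).indicator fun _ => s) (ball x ε) vol :=
    (integrableOn_const measure_ball_lt_top.ne).indicator measurableSet_ball
  have integral_le : ∫ y in ball x ε, g y ∂vol ≤
      ∫ y in ball x ε, (inner ℝ k y + b) - (ball w δ).indicator (fun _ => s) y ∂vol := by
    refine setIntegral_mono_on hg (integrable_affine.sub integrable_indicator)
      measurableSet_ball fun y hy => ?_
    by_cases hyw : y ∈ ball w δ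
    · simpa only [Set.indicator_of_mem hyw] using hle_sub y hyw
    · simpa only [Set.indicator_of_notMem hyw, sub_zero] using hle y hy
  rw [integral_sub integrable_affine integrable_indicator, setIntegral_ball_affine,
    setIntegral_indicator measurableSet_ball, Set.inter_eq_right.2 hsub, setIntegral_const,
    smul_eq_mul, addHaar_real_ball vol w hδ] at integral_le
  have unitBall_pos := addHaar_real_unitBall_pos vol
  rw [setAverage_eq, smul_eq_mul, ← div_eq_inv_mul,
    div_le_iff₀ (by rw [addHaar_real_ball vol x hε]; positivity), sub_mul]
  refine integral_le.trans_eq ?_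
  rw [addHaar_real_ball vol x hε, div_pow]
  field_simp

end BallAverages

section Masses

variable {F : Type*} [NormedAddCommGroup F] [NormedSpace ℝ F] [FiniteDimensional ℝ F]
  [Nontrivial F] [MeasurableSpace F] [BorelSpace F] (vol : Measure F) [vol.IsAddHaarMeasure]

theorem addHaar_ball_mul_rpow {c I : ℝ} (hc : 0 ≤ c) (hI : 0 ≤ I) :
    vol (ball 0 (c * ((vol.real (ball 0 1))⁻¹ * I) ^ ((Module.finrank ℝ F : ℝ)⁻¹))) =
      ENNReal.ofReal (c ^ Module.finrank ℝ F * I) := by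
  have unitBall_pos := addHaar_real_unitBall_pos vol
  rw [Measure.addHaar_ball vol 0 (by positivity), mul_pow,
    Real.rpow_inv_natCast_pow (by positivity) Module.finrank_pos.ne',
    ← ofReal_measureReal measure_ball_lt_top.ne, ← ENNReal.ofReal_mul (by positivity)]
  field_simp

theorem addHaar_ball_setAverage_lt {f : F → ℝ} {x p : F} {c r ρ : ℝ} (hc : 0 < c) (hr : 0 < r)
    (hsub : ball x r ⊆ ball p ρ) (hf0 : ∀ y, 0 ≤ f y) (hf : IntegrableOn f (ball p ρ) vol)
    (hfd : IntegrableOn (fun y => f y ^ Module.finrank ℝ F) (ball p ρ) vol)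
    (hpos : 0 < ⨍ y in ball x r, f y ∂vol) :
    vol (ball 0 (c * r * ⨍ y in ball x r, f y ∂vol)) <
      ENNReal.ofReal
        ((2 * c) ^ Module.finrank ℝ F * ∫ y in ball p ρ, f y ^ Module.finrank ℝ F ∂vol) := by
  set d := Module.finrank ℝ F
  set A := ⨍ y in ball x r, f y ∂vol
  have radius_pos : 0 < c * r * A := by positivity
  have measure_le : vol.real (ball 0 (c * r * A)) ≤ c ^ d * ∫ y in ball p ρ, f y ^ d ∂vol := by
    calc vol.real (ball 0 (c * r * A))
        = c ^ d * (A ^ d * vol.real (ball x r)) := by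
          rw [addHaar_real_ball vol 0 radius_pos, addHaar_real_ball vol x hr]
          ring
      _ ≤ c ^ d * ∫ y in ball x r, f y ^ d ∂vol := by
          gcongr
          exact setAverage_pow_mul_measureReal_le d measure_ball_lt_top.ne hf0
            (hf.mono_set hsub) (hfd.mono_set hsub)
      _ ≤ c ^ d * ∫ y in ball p ρ, f y ^ d ∂vol := by
          refine mul_le_mul_of_nonneg_left ?_ (by positivity)
          exact setIntegral_mono_set hfd (ae_of_all _ fun y => pow_nonneg (hf0 y) d)
            hsub.eventuallyLE
  have mass_pos : 0 < c ^ d * ∫ y in ball p ρ, f y ^ d ∂vol :=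
    (ENNReal.toReal_pos (measure_ball_pos vol 0 radius_pos).ne' measure_ball_lt_top.ne).trans_le
      measure_le
  rw [← ofReal_measureReal measure_ball_lt_top.ne,
    ENNReal.ofReal_lt_ofReal_iff_of_nonneg measureReal_nonneg, mul_pow, mul_assoc (2 ^ d)]
  exact measure_le.trans_lt <| lt_mul_left mass_pos <|
    one_lt_pow₀ one_lt_two (Module.finrank_pos (R := ℝ) (M := F)).ne'

end Masses

theorem exists_le_addHaar_contactSlopes_of_separated [FiniteDimensional ℝ E] [Nontrivial E]
    [MeasurableSpace E] [BorelSpace E] (vol : Measure E) [vol.IsAddHaarMeasure] {t : Finset E}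
    {z : E} {R c ε : ℝ} (hc : 0 ≤ c) (hε : 0 < ε) (htR : ∀ p ∈ t, dist p z < R)
    (hsep : (t : Set E).Pairwise fun p q => ε / 2 ≤ dist p q) {F : E → ℝ}
    (hF : Integrable F vol) (hF0 : ∀ y, 0 ≤ F y) :
    ∃ h : t → ℝ,
      (∀ i, h i ≤ 2 * R * (9 * c * ((vol.real (ball (0 : E) 1))⁻¹ * ∫ y, F y ∂vol) ^
        ((Module.finrank ℝ E : ℝ)⁻¹))) ∧
      ∀ i : t, ENNReal.ofReal (c ^ Module.finrank ℝ E * ∫ y in ball (i : E) (2 * ε), F y ∂vol) ≤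
        vol (contactSlopes (closedBall z R) ((↑) : t → E) h i) := by
  have unitBall_pos := addHaar_real_unitBall_pos vol
  have masses_nonneg (i : t) : 0 ≤ c ^ Module.finrank ℝ E * ∫ y in ball (i : E) (2 * ε), F y ∂vol :=
    mul_nonneg (by positivity) (integral_nonneg fun y => hF0 y)
  have radius_nonneg : 0 ≤ 9 * c * ((vol.real (ball (0 : E) 1))⁻¹ * ∫ y, F y ∂vol) ^
      ((Module.finrank ℝ E : ℝ)⁻¹) := by
    have : 0 ≤ ∫ y, F y ∂vol := integral_nonneg hF0
    positivity
  refine exists_le_addHaar_contactSlopes vol Subtype.val_injective (fun p => htR p p.2)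
    radius_nonneg ?_
  rw [addHaar_ball_mul_rpow vol (by positivity) (integral_nonneg hF0),
    ← ENNReal.ofReal_sum_of_nonneg fun i _ => masses_nonneg i, ← Finset.mul_sum,
    Finset.sum_coe_sort t fun p => ∫ y in ball p (2 * ε), F y ∂vol, mul_comm 9 c, mul_pow,
    mul_assoc]
  have overlap := sum_setIntegral_ball_le (half_pos hε) (by positivity : 0 ≤ 2 * ε) hsep hF hF0
  rw [show (2 * (2 * ε) + ε / 2) / (ε / 2) = 9 by field_simp; norm_num] at overlap
  gcongr

section Supersolution

variable [FiniteDimensional ℝ E] [MeasurableSpace E] (vol : Measure E)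

/-- The constant of the `ε`-ABP estimate on `E`. Its factor `288` is `2` (heights against slopes)
times `9` (overlap of the balls around the net) times `2` (strictness of the masses) times `8` (the
envelope drops on a ball of radius `ε / 8`). -/
def abpConst : ℝ :=
  288 * 8 ^ Module.finrank ℝ E *
    (vol.real (ball (0 : E) 1))⁻¹ ^ ((Module.finrank ℝ E : ℝ)⁻¹)

theorem abpConst_pos [vol.IsAddHaarMeasure] : 0 < abpConst vol := by
  have := addHaar_real_unitBall_pos vol
  unfold abpConst
  positivity

variable [BorelSpace E] {ι : Type*} {K : Set E} {P : ι → E} {h : ι → ℝ} {B : ℝ}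

theorem integral_concaveEnvelope_le (hB : 0 ≤ B) (hhB : ∀ i, h i ≤ B) {ν : Measure E}
    [IsProbabilityMeasure ν] (hν : Integrable (fun v => v) ν) (hν0 : ∫ v, v ∂ν = 0) {x : E} {ε : ℝ}
    (hK : ∀ᵐ v ∂ν, x + ε • v ∈ K) :
    ∫ v, concaveEnvelope K P h (x + ε • v) ∂ν ≤ concaveEnvelope K P h x := by
  refine le_of_forall_pos_le_add fun η hη => ?_
  obtain ⟨a, ha, value_lt⟩ :=
    exists_affineMajorant_lt ⟨_, zero_prodMk_mem_affineMajorants hB hhB⟩ x hη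
  have integrable_envelope : Integrable (fun v => concaveEnvelope K P h (x + ε • v)) ν :=
    .of_bound (measurable_concaveEnvelope.comp (by fun_prop)).aestronglyMeasurable B <|
      ae_of_all ν fun v => by
        rw [Real.norm_of_nonneg (concaveEnvelope_nonneg _)]
        exact concaveEnvelope_le hB hhB _
  have integrable_inner : Integrable (fun v => inner ℝ (ε • a.1) v) ν := hν.const_inner _
  calc ∫ v, concaveEnvelope K P h (x + ε • v) ∂ν
      ≤ ∫ v, (inner ℝ (ε • a.1) v + (inner ℝ a.1 x + a.2)) ∂ν := by
        refine integral_mono_ae integrable_envelope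
          (integrable_inner.add (integrable_const _)) ?_
        filter_upwards [hK] with v hv
        refine (concaveEnvelope_le_of_mem ha hv).trans_eq ?_
        rw [inner_add_right, inner_smul_right, real_inner_smul_left]
        ring
    _ = inner ℝ a.1 x + a.2 := by
        rw [integral_add integrable_inner (integrable_const _), integral_inner hν, hν0]
        simp
    _ ≤ concaveEnvelope K P h x + η := value_lt.le

variable [vol.IsAddHaarMeasure]

theorem setAverage_concaveEnvelope_le (hB : 0 ≤ B) (hhB : ∀ i, h i ≤ B) {x : E} {ε s : ℝ}
    (hε : 0 < ε) (hK : ball x ε ⊆ K) {i : ι} (hxi : dist x (P i) ≤ ε / 2)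
    (hs : 0 < s → vol (ball 0 s) < vol (contactSlopes K P h i)) :
    ⨍ y in ball x ε, concaveEnvelope K P h y ∂vol ≤
      concaveEnvelope K P h x - s * (ε / 8) * (1 / 8) ^ Module.finrank ℝ E := by
  refine le_of_forall_pos_le_add fun η hη => ?_
  obtain ⟨a, ha, value_lt⟩ :=
    exists_affineMajorant_lt ⟨_, zero_prodMk_mem_affineMajorants hB hhB⟩ x hη
  have integrable_envelope : IntegrableOn (concaveEnvelope K P h) (ball x ε) vol :=
    Measure.integrableOn_of_bounded measure_ball_lt_top.ne
      measurable_concaveEnvelope.aestronglyMeasurable (M := B) <| ae_of_all _ fun y => by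
        rw [Real.norm_of_nonneg (concaveEnvelope_nonneg y)]
        exact concaveEnvelope_le hB hhB y
  obtain ⟨w, hw, envelope_drop⟩ :=
    exists_ball_concaveEnvelope_le vol ha (by positivity : 0 ≤ ε / 8) hs
  have small_ball_subset : ball w (ε / 8) ⊆ ball x ε :=
    ball_subset_ball' (by linarith [dist_triangle_right w x (P i)])
  have drop := setAverage_ball_le_sub vol (by positivity) hε small_ball_subset integrable_envelope
    (fun y hy => concaveEnvelope_le_of_mem ha (hK hy))
    (fun y hy => envelope_drop y hy (hK (small_ball_subset hy)))
  rw [show ε / 8 / ε = 1 / 8 by field_simp] at drop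
  linarith

theorem exists_addHaar_ball_lt_contactSlopes [Nontrivial E] {D : Set E} {z : E} {R ε : ℝ}
    (hD : TotallyBounded D) (hDR : D ⊆ ball z R) (hε : 0 < ε) {f : E → ℝ} (hf0 : ∀ y, 0 ≤ f y)
    (hf : Integrable f vol) (hfd : Integrable (fun y => f y ^ Module.finrank ℝ E) vol) :
    ∃ (t : Finset E) (h : t → ℝ),
      (∀ i, h i ≤ abpConst vol * R *
        (∫ y, f y ^ Module.finrank ℝ E ∂vol) ^ ((Module.finrank ℝ E : ℝ)⁻¹)) ∧
      ∀ x ∈ D, ∃ i : t, dist x i ≤ ε / 2 ∧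
        (0 < ⨍ y in ball x ε, f y ∂vol →
          vol (ball 0 (8 * 8 ^ Module.finrank ℝ E * ε * ⨍ y in ball x ε, f y ∂vol)) <
            vol (contactSlopes (closedBall z R) (↑) h i)) := by
  set d := Module.finrank ℝ E
  have pow_nonneg (y : E) : 0 ≤ f y ^ d := pow_nonneg (hf0 y) d
  obtain ⟨t, t_subset, t_separated, t_net⟩ := exists_finset_separated_net hD (half_pos hε)
  obtain ⟨h, h_le, mass_le⟩ := exists_le_addHaar_contactSlopes_of_separated vol
    (by positivity : 0 ≤ 2 * (8 * 8 ^ d : ℝ)) hε (fun p hp => hDR (t_subset hp)) t_separated hfd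
    pow_nonneg
  refine ⟨t, h, fun i => (h_le i).trans_eq ?_, fun x hx => ?_⟩
  · rw [Real.mul_rpow (inv_nonneg.2 measureReal_nonneg) (integral_nonneg pow_nonneg), abpConst]
    ring
  · obtain ⟨p, hp, hxp⟩ := t_net x hx
    refine ⟨⟨p, hp⟩, hxp, fun average_pos => lt_of_lt_of_le ?_ (mass_le ⟨p, hp⟩)⟩
    exact addHaar_ball_setAverage_lt vol (by positivity) hε (ball_subset_ball' (by linarith)) hf0
      hf.integrableOn hfd.integrableOn average_pos

/-- The supersolution is the concave envelope of heights over an `ε / 2`-net of `D`, chosen by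
discrete Monge–Ampère so that near every `x ∈ D` the slopes fill more than a ball of radius
`8 * 8 ^ d * ε * ⨍_{B_ε(x)} f`. -/
theorem exists_supersolution [Nontrivial E] {D : Set E} (hD : Bornology.IsBounded D) {f : E → ℝ}
    (hf0 : ∀ y, 0 ≤ f y) (hf : Integrable f vol)
    (hfd : Integrable (fun y => f y ^ Module.finrank ℝ E) vol) {Λ ε : ℝ} (hΛ : 1 ≤ Λ)
    (hε : 0 < ε) :
    ∃ V : E → ℝ, Measurable V ∧ (∀ y, 0 ≤ V y) ∧
      (∀ y, V y ≤ abpConst vol * (diam D + Λ * ε) *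
        (∫ y, f y ^ Module.finrank ℝ E ∂vol) ^ ((Module.finrank ℝ E : ℝ)⁻¹)) ∧
      ∀ x ∈ D, ⨍ y in ball x ε, V y ∂vol ≤ V x - ε ^ 2 * ⨍ y in ball x ε, f y ∂vol ∧
        ∀ ν : Measure E, IsProbabilityMeasure ν → closedBall 0 Λ ∈ ae ν → ∫ v, v ∂ν = 0 →
          ∫ v, V (x + ε • v) ∂ν ≤ V x := by
  set R := diam D + Λ * ε with R_def
  have ε_le : ε ≤ Λ * ε := le_mul_of_one_le_left hε.le hΛ
  have bound_nonneg : 0 ≤ abpConst vol * R *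
      (∫ y, f y ^ Module.finrank ℝ E ∂vol) ^ ((Module.finrank ℝ E : ℝ)⁻¹) := by
    have := (abpConst_pos vol).le
    have : 0 ≤ ∫ y, f y ^ Module.finrank ℝ E ∂vol := integral_nonneg fun y => pow_nonneg (hf0 y) _
    positivity
  obtain rfl | ⟨z, hz⟩ := D.eq_empty_or_nonempty
  · exact ⟨0, measurable_zero, fun _ => le_rfl, fun _ => bound_nonneg, by simp⟩
  have dist_le (x : E) (hx : x ∈ D) : dist x z ≤ diam D := dist_le_diam_of_mem hD hx hz
  have D_subset : D ⊆ ball z R := fun x hx => mem_ball.2 (by linarith [dist_le x hx])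
  have D_totallyBounded : TotallyBounded D :=
    hD.isCompact_closure.totallyBounded.subset subset_closure
  obtain ⟨t, h, h_le, exists_node⟩ :=
    exists_addHaar_ball_lt_contactSlopes vol D_totallyBounded D_subset hε hf0 hf hfd
  refine ⟨concaveEnvelope (closedBall z R) (↑) h, measurable_concaveEnvelope,
    concaveEnvelope_nonneg, concaveEnvelope_le bound_nonneg h_le, fun x hx => ⟨?_, ?_⟩⟩
  · obtain ⟨i, hxi, slopes_lt⟩ := exists_node x hx
    have ball_subset : ball x ε ⊆ closedBall z R :=
      (ball_subset_ball' (by linarith [dist_le x hx])).trans ball_subset_closedBall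
    refine (setAverage_concaveEnvelope_le vol bound_nonneg h_le hε ball_subset hxi
      fun radius_pos => slopes_lt (pos_of_mul_pos_right radius_pos (by positivity))).trans_eq ?_
    rw [one_div, inv_pow]
    field_simp
  · intro ν _ ν_support ν_mean
    have integrable_id : Integrable (fun v => v) ν :=
      .of_bound aestronglyMeasurable_id Λ <| by
        filter_upwards [ν_support] with v hv using mem_closedBall_zero_iff.1 hv
    refine integral_concaveEnvelope_le bound_nonneg h_le integrable_id ν_mean ?_
    filter_upwards [ν_support] with v hv
    exact add_smul_mem_closedBall hε.le (dist_le x hx) (mem_closedBall_zero_iff.1 hv)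

end Supersolution

section ExitTimes

variable {Ω F : Type*} {mΩ : MeasurableSpace Ω} {μ : Measure Ω} {X : ℕ → Ω → F} {D : Set F}

/-- The event `i < τ` that the process `X` has not left `D` up to time `i`. -/
def survivalSet (X : ℕ → Ω → F) (D : Set F) (i : ℕ) : Set Ω := {ω | ∀ j ≤ i, X j ω ∈ D}

/-- The exit time `τ` of the process `X` from `D`, equal to `∞` on paths that never leave `D`. -/
def exitTime (X : ℕ → Ω → F) (D : Set F) (ω : Ω) : ℝ≥0∞ := ⨅ (k : ℕ) (_ : X k ω ∉ D), (k : ℝ≥0∞)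

theorem survivalSet_antitone : Antitone (survivalSet X D) :=
  fun _ _ hij _ hω k hk => hω k (hk.trans hij)

theorem measurableSet_survivalSet [MeasurableSpace F] {𝔉 : Filtration ℕ mΩ} (hX : Adapted 𝔉 X)
    (hD : MeasurableSet D) (i : ℕ) : MeasurableSet[𝔉 i] (survivalSet X D i) := by
  rw [show survivalSet X D i = ⋂ j, ⋂ (_ : j ≤ i), X j ⁻¹' D by ext; simp [survivalSet]]
  exact .iInter fun j => .iInter fun hj => 𝔉.mono hj _ (hX j hD)

theorem tsum_indicator_survivalSet_le_exitTime (ω : Ω) :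
    ∑' i, (survivalSet X D i).indicator 1 ω ≤ exitTime X D ω := by
  refine le_iInf₂ fun k hk => ?_
  have notMem (i : ℕ) (hi : i ∉ Finset.range k) : ω ∉ survivalSet X D i :=
    fun hω => hk (hω k (by simpa using hi))
  calc ∑' i, (survivalSet X D i).indicator 1 ω
      = ∑ i ∈ Finset.range k, (survivalSet X D i).indicator 1 ω :=
        tsum_eq_sum fun i hi => Set.indicator_of_notMem (notMem i hi) _
    _ ≤ ∑ _i ∈ Finset.range k, (1 : ℝ≥0∞) :=
        Finset.sum_le_sum fun i _ => Set.indicator_le_self' (fun _ _ => zero_le) ω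
    _ = k := by simp

theorem tsum_measure_survivalSet_le (h : ∀ i, MeasurableSet (survivalSet X D i)) :
    ∑' i, μ (survivalSet X D i) ≤ ∫⁻ ω, exitTime X D ω ∂μ :=
  calc ∑' i, μ (survivalSet X D i)
      = ∫⁻ ω, ∑' i, (survivalSet X D i).indicator 1 ω ∂μ := by
        rw [lintegral_tsum fun i => (measurable_one.indicator (h i)).aemeasurable]
        exact tsum_congr fun i => (lintegral_indicator_one (h i)).symm
    _ ≤ ∫⁻ ω, exitTime X D ω ∂μ := lintegral_mono tsum_indicator_survivalSet_le_exitTime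

end ExitTimes

section Drift

variable {Ω : Type*} {mΩ : MeasurableSpace Ω} {μ : Measure Ω} {𝔉 : Filtration ℕ mΩ}
  {A : ℕ → Set Ω} {G φ : ℕ → Ω → ℝ} {r c : ℝ}

theorem lintegral_tsum_indicator_ofReal (hA : ∀ i, MeasurableSet (A i))
    (hφ : ∀ i, Integrable (φ i) μ) (hφ0 : ∀ i ω, 0 ≤ φ i ω) :
    ∫⁻ ω, ∑' i, (A i).indicator (fun ω => ENNReal.ofReal (φ i ω)) ω ∂μ =
      ∑' i, ENNReal.ofReal (∫ ω in A i, φ i ω ∂μ) := by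
  rw [lintegral_tsum fun i => (hφ i).aestronglyMeasurable.aemeasurable.ennreal_ofReal.indicator
    (hA i)]
  refine tsum_congr fun i => ?_
  rw [lintegral_indicator (hA i),
    ofReal_integral_eq_lintegral_ofReal (hφ i).integrableOn (ae_of_all _ (hφ0 i))]

variable [IsFiniteMeasure μ]

theorem setIntegral_succ_le_of_condExp_le (hA : ∀ i, MeasurableSet[𝔉 i] (A i))
    (hA_anti : Antitone A) (hG : ∀ i, Integrable (G i) μ) (hG0 : ∀ i ω, 0 ≤ G i ω)
    {U : Ω → ℝ} (hU : Integrable U μ) {i : ℕ}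
    (h : ∀ᵐ ω ∂μ, ω ∈ A i → (μ[G (i + 1) | 𝔉 i]) ω ≤ U ω) :
    ∫ ω in A (i + 1), G (i + 1) ω ∂μ ≤ ∫ ω in A i, U ω ∂μ :=
  calc ∫ ω in A (i + 1), G (i + 1) ω ∂μ
      ≤ ∫ ω in A i, G (i + 1) ω ∂μ :=
        setIntegral_mono_set (hG _).integrableOn (ae_of_all _ (hG0 _))
          (hA_anti i.le_succ).eventuallyLE
    _ = ∫ ω in A i, (μ[G (i + 1) | 𝔉 i]) ω ∂μ :=
        (setIntegral_condExp (𝔉.le i) (hG _) (hA i)).symm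
    _ ≤ ∫ ω in A i, U ω ∂μ :=
        setIntegral_mono_on_ae integrable_condExp.integrableOn hU.integrableOn
          (𝔉.le i _ (hA i)) h

theorem sum_setIntegral_le_of_condExp_le (hA : ∀ i, MeasurableSet[𝔉 i] (A i))
    (hA_anti : Antitone A) (hG : ∀ i, Integrable (G i) μ) (hG0 : ∀ i ω, 0 ≤ G i ω)
    (hφ : ∀ i, Integrable (φ i) μ)
    (h : ∀ i, ∀ᵐ ω ∂μ, ω ∈ A i → (μ[G (i + 1) | 𝔉 i]) ω ≤ G i ω - r * φ i ω + c) (n : ℕ) :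
    r * ∑ i ∈ Finset.range n, ∫ ω in A i, φ i ω ∂μ ≤
      ∫ ω in A 0, G 0 ω ∂μ + c * ∑ i ∈ Finset.range n, μ.real (A i) := by
  have step (i : ℕ) : ∫ ω in A (i + 1), G (i + 1) ω ∂μ ≤
      ∫ ω in A i, G i ω ∂μ - r * ∫ ω in A i, φ i ω ∂μ + c * μ.real (A i) := by
    have integrable_sub : Integrable (fun ω => G i ω - r * φ i ω) μ :=
      (hG i).sub ((hφ i).const_mul r)
    refine (setIntegral_succ_le_of_condExp_le hA hA_anti hG hG0
      (U := fun ω => G i ω - r * φ i ω + c) (integrable_sub.add (integrable_const c))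
      (h i)).trans_eq ?_
    rw [integral_add integrable_sub.integrableOn (integrable_const c),
      integral_sub (hG i).integrableOn ((hφ i).const_mul r).integrableOn, integral_const_mul,
      setIntegral_const, smul_eq_mul, mul_comm c]
  have telescoped : ∫ ω in A n, G n ω ∂μ + r * ∑ i ∈ Finset.range n, ∫ ω in A i, φ i ω ∂μ ≤
      ∫ ω in A 0, G 0 ω ∂μ + c * ∑ i ∈ Finset.range n, μ.real (A i) := by
    induction n with
    | zero => simp
    | succ n ih =>
      rw [Finset.sum_range_succ, Finset.sum_range_succ]
      linarith [step n]
  have remainder_nonneg : 0 ≤ ∫ ω in A n, G n ω ∂μ := integral_nonneg (hG0 n)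
  linarith

theorem lintegral_tsum_indicator_le_of_condExp_le (hA : ∀ i, MeasurableSet[𝔉 i] (A i))
    (hA_anti : Antitone A) (hG : ∀ i, Integrable (G i) μ) (hG0 : ∀ i ω, 0 ≤ G i ω)
    (hφ : ∀ i, Integrable (φ i) μ) (hφ0 : ∀ i ω, 0 ≤ φ i ω) (hr : 0 ≤ r) (hc : 0 ≤ c)
    (h : ∀ i, ∀ᵐ ω ∂μ, ω ∈ A i → (μ[G (i + 1) | 𝔉 i]) ω ≤ G i ω - r * φ i ω + c) :
    ENNReal.ofReal r * ∫⁻ ω, ∑' i, (A i).indicator (fun ω => ENNReal.ofReal (φ i ω)) ω ∂μ ≤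
      ENNReal.ofReal (∫ ω in A 0, G 0 ω ∂μ) + ENNReal.ofReal c * ∑' i, μ (A i) := by
  rw [lintegral_tsum_indicator_ofReal (fun i => 𝔉.le i _ (hA i)) hφ hφ0, ← ENNReal.tsum_mul_left]
  refine ENNReal.tsum_le_of_sum_range_le fun n => ?_
  calc ∑ i ∈ Finset.range n, ENNReal.ofReal r * ENNReal.ofReal (∫ ω in A i, φ i ω ∂μ)
      = ENNReal.ofReal (r * ∑ i ∈ Finset.range n, ∫ ω in A i, φ i ω ∂μ) := by
        rw [← Finset.mul_sum, ENNReal.ofReal_mul hr,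
          ENNReal.ofReal_sum_of_nonneg fun i _ => integral_nonneg (hφ0 i)]
    _ ≤ ENNReal.ofReal (∫ ω in A 0, G 0 ω ∂μ + c * ∑ i ∈ Finset.range n, μ.real (A i)) :=
        ENNReal.ofReal_le_ofReal (sum_setIntegral_le_of_condExp_le hA hA_anti hG hG0 hφ h n)
    _ = ENNReal.ofReal (∫ ω in A 0, G 0 ω ∂μ) +
          ENNReal.ofReal c * ∑ i ∈ Finset.range n, μ (A i) := by
        rw [ENNReal.ofReal_add (integral_nonneg (hG0 0))
            (mul_nonneg hc (Finset.sum_nonneg fun _ _ => measureReal_nonneg)),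
          ENNReal.ofReal_mul hc, ENNReal.ofReal_sum_of_nonneg fun _ _ => measureReal_nonneg,
          Finset.sum_congr rfl fun i _ => ofReal_measureReal (measure_ne_top μ (A i))]
    _ ≤ _ := by
        gcongr
        exact ENNReal.sum_le_tsum _

end Drift

section ExitEstimate

variable [MeasurableSpace E] (vol : Measure E)

/-- The one-step expectation `α ∫ g(x + εz) dν(z) + β ⨍_{B_ε(x)} g` of the process at `x`, where
`α = 1 - β` and `ν` is the jump law at `x`. -/
def stepMean (ν : Measure E) (β ε : ℝ) (g : E → ℝ) (x : E) : ℝ :=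
  (1 - β) * ∫ z, g (x + ε • z) ∂ν + β * ⨍ y in ball x ε, g y ∂vol

theorem integrable_comp_of_nonneg_of_le {Ω F : Type*} [MeasurableSpace Ω]
    [MeasurableSpace F] {μ : Measure Ω} [IsFiniteMeasure μ] {Y : Ω → F} (hY : Measurable Y)
    {g : F → ℝ} (hg : Measurable g) (hg0 : ∀ y, 0 ≤ g y) {C : ℝ} (hgC : ∀ y, g y ≤ C) :
    Integrable (fun ω => g (Y ω)) μ :=
  .of_bound (hg.comp hY).aestronglyMeasurable C <|
    ae_of_all μ fun _ => (Real.norm_of_nonneg (hg0 _)).trans_le (hgC _)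

variable {V f : E → ℝ} {B S β ε r : ℝ}

theorem stepMean_add_mul_le [FiniteDimensional ℝ E] [BorelSpace E] [vol.IsAddHaarMeasure]
    {ν : Measure E} [IsProbabilityMeasure ν] (hβ : β ∈ Set.Icc 0 1) (hr : 0 ≤ r) (hV : Measurable V)
    (hV0 : ∀ y, 0 ≤ V y) (hVB : ∀ y, V y ≤ B) (hf : Measurable f) (hf0 : ∀ y, 0 ≤ f y)
    (hfS : ∀ y, f y ≤ S) {x : E} (hν : ∫ v, V (x + ε • v) ∂ν ≤ V x)
    (h_average : ⨍ y in ball x ε, V y ∂vol ≤ V x - r * ⨍ y in ball x ε, f y ∂vol) :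
    stepMean vol ν β ε (fun y => V y + r * f y) x ≤ V x + r * ((1 - β) * S) := by
  have measurable_jump : Measurable fun v : E => x + ε • v := by fun_prop
  have jump_le : ∫ v, (V (x + ε • v) + r * f (x + ε • v)) ∂ν ≤ V x + r * S := by
    have integrable_f := integrable_comp_of_nonneg_of_le (μ := ν) measurable_jump hf hf0 hfS
    rw [integral_add (integrable_comp_of_nonneg_of_le measurable_jump hV hV0 hVB)
      (integrable_f.const_mul r), integral_const_mul]
    have integral_f_le : ∫ v, f (x + ε • v) ∂ν ≤ S := by
      simpa using integral_mono integrable_f (integrable_const S) fun v => hfS _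
    gcongr
  have average_le : ⨍ y in ball x ε, (V y + r * f y) ∂vol ≤ V x := by
    have : IsFiniteMeasure (vol.restrict (ball x ε)) := ⟨by simpa using measure_ball_lt_top⟩
    have integrable_V : IntegrableOn V (ball x ε) vol :=
      integrable_comp_of_nonneg_of_le measurable_id hV hV0 hVB
    have integrable_f : IntegrableOn f (ball x ε) vol :=
      integrable_comp_of_nonneg_of_le measurable_id hf hf0 hfS
    rw [setAverage_eq, integral_add integrable_V (integrable_f.const_mul r), integral_const_mul,
      smul_add, mul_comm r, ← smul_mul_assoc, ← setAverage_eq, ← setAverage_eq]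
    linarith
  calc stepMean vol ν β ε (fun y => V y + r * f y) x
      ≤ (1 - β) * (V x + r * S) + β * V x :=
        add_le_add (mul_le_mul_of_nonneg_left jump_le (sub_nonneg.2 hβ.2))
          (mul_le_mul_of_nonneg_left average_le hβ.1)
    _ = V x + r * ((1 - β) * S) := by ring

variable {Ω : Type*} {mΩ : MeasurableSpace Ω} {μ : Measure Ω} [IsProbabilityMeasure μ]
  {𝔉 : Filtration ℕ mΩ} {X : ℕ → Ω → E} {D : Set E}

theorem lintegral_tsum_survivalSet_le_of_stepMean_le (hβ : β ≤ 1) (hr : 0 ≤ r) (hB : 0 ≤ B)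
    (hS : 0 ≤ S) (hV : Measurable V) (hV0 : ∀ y, 0 ≤ V y) (hVB : ∀ y, V y ≤ B)
    (hf : Measurable f) (hf0 : ∀ y, 0 ≤ f y) (hfS : ∀ y, f y ≤ S) (hD : MeasurableSet D)
    (hX : Adapted 𝔉 X) {ν : E → Measure E}
    (h_step : ∀ k, μ[fun ω => V (X (k + 1) ω) + r * f (X (k + 1) ω) | 𝔉 k] =ᵐ[μ]
      fun ω => stepMean vol (ν (X k ω)) β ε (fun y => V y + r * f y) (X k ω))
    (h_stepMean : ∀ x ∈ D,
      stepMean vol (ν x) β ε (fun y => V y + r * f y) x ≤ V x + r * ((1 - β) * S)) :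
    ENNReal.ofReal r * ∫⁻ ω, ∑' i,
        (survivalSet X D i).indicator (fun ω => ENNReal.ofReal (f (X i ω))) ω ∂μ ≤
      (ENNReal.ofReal r + ENNReal.ofReal (1 - β) *
        (ENNReal.ofReal r * ∫⁻ ω, exitTime X D ω ∂μ)) * ENNReal.ofReal S + ENNReal.ofReal B := by
  have measurable_X (i : ℕ) : Measurable (X i) := (hX i).mono (𝔉.le i) le_rfl
  have measurableSet_survival := measurableSet_survivalSet hX hD
  have integrable_f (i : ℕ) : Integrable (fun ω => f (X i ω)) μ :=
    integrable_comp_of_nonneg_of_le (measurable_X i) hf hf0 hfS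
  have potential_nonneg (y : E) : 0 ≤ V y + r * f y := add_nonneg (hV0 y) (mul_nonneg hr (hf0 y))
  have potential_le (y : E) : V y + r * f y ≤ B + r * S :=
    add_le_add (hVB y) (mul_le_mul_of_nonneg_left (hfS y) hr)
  have integrable_potential (i : ℕ) : Integrable (fun ω => V (X i ω) + r * f (X i ω)) μ :=
    integrable_comp_of_nonneg_of_le (measurable_X i) (hV.add (hf.const_mul r)) potential_nonneg
      potential_le
  have initial_le : ∫ ω in survivalSet X D 0, (V (X 0 ω) + r * f (X 0 ω)) ∂μ ≤ B + r * S :=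
    (setIntegral_mono (integrable_potential 0).integrableOn (integrable_const _).integrableOn
      fun ω => potential_le _).trans <| by
        rw [setIntegral_const, smul_eq_mul]
        exact mul_le_of_le_one_left (by positivity) measureReal_le_one
  have drift (i : ℕ) : ∀ᵐ ω ∂μ, ω ∈ survivalSet X D i →
      (μ[fun ω => V (X (i + 1) ω) + r * f (X (i + 1) ω) | 𝔉 i]) ω ≤
        V (X i ω) + r * f (X i ω) - r * f (X i ω) + r * ((1 - β) * S) := by
    filter_upwards [h_step i] with ω hω survives
    rw [hω, add_sub_cancel_right]
    exact h_stepMean _ (survives i le_rfl)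
  have hβ0 : 0 ≤ 1 - β := sub_nonneg.2 hβ
  calc _ ≤ ENNReal.ofReal (∫ ω in survivalSet X D 0, (V (X 0 ω) + r * f (X 0 ω)) ∂μ) +
        ENNReal.ofReal (r * ((1 - β) * S)) * ∑' i, μ (survivalSet X D i) :=
        lintegral_tsum_indicator_le_of_condExp_le measurableSet_survival survivalSet_antitone
          integrable_potential (fun i ω => potential_nonneg _) integrable_f (fun i ω => hf0 _) hr
          (by positivity) drift
    _ ≤ ENNReal.ofReal (B + r * S) +
        ENNReal.ofReal (r * ((1 - β) * S)) * ∫⁻ ω, exitTime X D ω ∂μ := by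
        gcongr
        exact tsum_measure_survivalSet_le fun i => 𝔉.le i _ (measurableSet_survival i)
    _ = _ := by
        rw [ENNReal.ofReal_add hB (by positivity), ENNReal.ofReal_mul hr, ENNReal.ofReal_mul hr,
          ENNReal.ofReal_mul hβ0]
        ring

end ExitEstimate

theorem integral_id_eq_zero_of_measure_neg_eq {F : Type*} [NormedAddCommGroup F] [NormedSpace ℝ F]
    [MeasurableSpace F] [MeasurableNeg F] {ν : Measure F}
    (hν : ∀ s, MeasurableSet s → ν s = ν (-s)) : ∫ z, z ∂ν = 0 := by
  have : IsAddTorsionFree F := .of_isTorsionFree ℝ F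
  have : ν.IsNegInvariant := ⟨Measure.ext fun s hs => by rw [Measure.neg_apply, ← hν s hs]⟩
  rw [← self_eq_neg, ← integral_neg, integral_neg_eq_self (fun z => z) ν]

theorem le_sSup_image_of_forall_notMem {α : Type*} {s : Set α} {f : α → ℝ}
    (hfs : BddAbove (f '' s)) (hf0 : ∀ y, 0 ≤ f y) (hf : ∀ y ∉ s, f y = 0) (y : α) :
    f y ≤ sSup (f '' s) := by
  by_cases hy : y ∈ s
  · exact le_csSup hfs ⟨y, hy, rfl⟩
  · rw [hf y hy]
    exact Real.sSup_nonneg (Set.forall_mem_image.2 fun z _ => hf0 z)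

theorem eps_ABP_measurable_general [FiniteDimensional ℝ E] [Nontrivial E] [MeasurableSpace E]
    [BorelSpace E] (vol : Measure E) [vol.IsAddHaarMeasure] {Λ β ε : ℝ} (hΛ : 1 ≤ Λ)
    (hβ : β ∈ Set.Icc 0 1) (hε : 0 < ε) {ν : E → Measure E} (hν : ∀ x, IsProbabilityMeasure (ν x))
    (hνΛ : ∀ x, closedBall 0 Λ ∈ ae (ν x)) (hν0 : ∀ x, ∫ z, z ∂ν x = 0) {D : Set E}
    (hD : MeasurableSet D) (hDb : Bornology.IsBounded D) {f : E → ℝ} (hf : Measurable f)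
    (hfb : ∃ M, ∀ y, |f y| ≤ M) (hf0 : ∀ y, 0 ≤ f y) (hfD : ∀ y ∉ D, f y = 0)
    {Ω : Type*} {mΩ : MeasurableSpace Ω} {μ : Measure Ω} [IsProbabilityMeasure μ]
    {𝔉 : Filtration ℕ mΩ} {X : ℕ → Ω → E} (hX : Adapted 𝔉 X)
    (h_step : ∀ (k : ℕ) (g : E → ℝ), Measurable g → (∃ M, ∀ y, |g y| ≤ M) →
      μ[fun ω => g (X (k + 1) ω) | 𝔉 k] =ᵐ[μ] fun ω => stepMean vol (ν (X k ω)) β ε g (X k ω)) :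
    ENNReal.ofReal (ε ^ 2) * ∫⁻ ω, ∑' i,
        (survivalSet X D i).indicator (fun ω => ENNReal.ofReal (f (X i ω))) ω ∂μ ≤
      (ENNReal.ofReal (ε ^ 2) + ENNReal.ofReal (1 - β) *
        (ENNReal.ofReal (ε ^ 2) * ∫⁻ ω, exitTime X D ω ∂μ)) * ENNReal.ofReal (sSup (f '' D)) +
      ENNReal.ofReal (abpConst vol * (diam D + Λ * ε)) *
        ENNReal.ofReal ((∫ y in D, f y ^ Module.finrank ℝ E ∂vol) ^
          ((Module.finrank ℝ E : ℝ)⁻¹)) := by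
  obtain ⟨M, hM⟩ := hfb
  have pow_eq_zero (y : E) (hy : y ∉ D) : f y ^ Module.finrank ℝ E = 0 := by
    rw [hfD y hy, zero_pow Module.finrank_pos.ne']
  have integrable_f : Integrable f vol :=
    integrable_of_bounded_of_forall_notMem hDb.measure_lt_top.ne hf hM hfD
  have integrable_pow : Integrable (fun y => f y ^ Module.finrank ℝ E) vol :=
    integrable_of_bounded_of_forall_notMem hDb.measure_lt_top.ne (hf.pow_const _)
      (fun y => (abs_pow (f y) _).trans_le (pow_le_pow_left₀ (abs_nonneg _) (hM y) _)) pow_eq_zero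
  have bddAbove : BddAbove (f '' D) :=
    ⟨M, Set.forall_mem_image.2 fun y _ => (le_abs_self _).trans (hM y)⟩
  have le_sup := le_sSup_image_of_forall_notMem bddAbove hf0 hfD
  obtain ⟨V, hV, V_nonneg, V_le, V_super⟩ :=
    exists_supersolution vol hDb hf0 integrable_f integrable_pow hΛ hε
  have potential_bounded : ∃ C, ∀ y, |V y + ε ^ 2 * f y| ≤ C :=
    ⟨_, fun y =>
      (abs_of_nonneg (add_nonneg (V_nonneg y) (mul_nonneg (sq_nonneg ε) (hf0 y)))).trans_le
        (add_le_add (V_le y) (mul_le_mul_of_nonneg_left (le_sup y) (sq_nonneg ε)))⟩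
  have factor_nonneg : 0 ≤ abpConst vol * (diam D + Λ * ε) := by
    have := (abpConst_pos vol).le
    positivity
  rw [setIntegral_eq_integral_of_forall_compl_eq_zero pow_eq_zero,
    ← ENNReal.ofReal_mul factor_nonneg]
  refine lintegral_tsum_survivalSet_le_of_stepMean_le vol hβ.2 (sq_nonneg ε)
    ((V_nonneg 0).trans (V_le 0)) ((hf0 0).trans (le_sup 0)) hV V_nonneg V_le hf hf0 le_sup hD hX
    (fun k => h_step k _ (hV.add (hf.const_mul _)) potential_bounded) fun x hx =>
      stepMean_add_mul_le vol hβ (sq_nonneg ε) hV V_nonneg V_le hf hf0 le_sup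
        ((V_super x hx).2 (ν x) (hν x) (hνΛ x) (hν0 x)) (V_super x hx).1

/-- `ε`-ABP estimate with bounded measurable right-hand side, in
expectation form: `E[ε² Σ_{i<τ} f(X_i)] ≤ (ε² + α E[ε²τ]) sup f + C (diam Ω + Λε) ‖f‖_N`,
with `C` depending only on `N`. -/
theorem eps_ABP_measurable (N : ℕ) (hN : 1 ≤ N) :
    ∃ C : ℝ, 0 < C ∧
      ∀ Λ β ε : ℝ, 1 ≤ Λ → β ∈ Set.Ioc (0 : ℝ) 1 → 0 < ε →
      ∀ (ν : EuclideanSpace ℝ (Fin N) → Measure (EuclideanSpace ℝ (Fin N))),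
        (∀ x, IsProbabilityMeasure (ν x)) →
        (∀ x, ν x (closedBall (0 : EuclideanSpace ℝ (Fin N)) Λ)ᶜ = 0) →
        (∀ x (E : Set (EuclideanSpace ℝ (Fin N))), MeasurableSet E → ν x E = ν x (-E)) →
        (∀ w : EuclideanSpace ℝ (Fin N) → ℝ, Measurable w → (∃ M, ∀ y, |w y| ≤ M) →
          Measurable fun x => ∫ z, w (x + z) ∂ν x) →
      ∀ (D : Set (EuclideanSpace ℝ (Fin N))), IsOpen D → IsConnected D →
        Bornology.IsBounded D →
      ∀ x₀ ∈ D,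
      ∀ f : EuclideanSpace ℝ (Fin N) → ℝ, Measurable f → (∃ M, ∀ y, |f y| ≤ M) →
        (∀ y, 0 ≤ f y) → (∀ y ∉ D, f y = 0) →
      ∀ (Ωhat : Type) [m0 : MeasurableSpace Ωhat] (μ : Measure Ωhat),
        IsProbabilityMeasure μ →
      ∀ (𝔉 : Filtration ℕ m0) (X : ℕ → Ωhat → EuclideanSpace ℝ (Fin N)),
        Adapted 𝔉 X → (∀ᵐ ω ∂μ, X 0 ω = x₀) →
        (∀ (k : ℕ) (g : EuclideanSpace ℝ (Fin N) → ℝ), Measurable g →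
          (∃ M, ∀ y, |g y| ≤ M) →
          (μ[(fun ω => g (X (k + 1) ω)) | 𝔉 k]) =ᵐ[μ]
            fun ω => (1 - β) * ∫ z, g (X k ω + ε • z) ∂ν (X k ω) +
              β * ⨍ y in ball (X k ω) ε, g y) →
        ENNReal.ofReal (ε ^ 2) *
            ∫⁻ ω, (∑' i : ℕ,
              Set.indicator {ω' | ∀ j ≤ i, X j ω' ∈ D}
                (fun ω' => ENNReal.ofReal (f (X i ω'))) ω) ∂μ ≤
          (ENNReal.ofReal (ε ^ 2) +
              ENNReal.ofReal (1 - β) *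
                (ENNReal.ofReal (ε ^ 2) *
                  ∫⁻ ω, (⨅ (k : ℕ) (_ : X k ω ∉ D), (k : ℝ≥0∞)) ∂μ)) *
            ENNReal.ofReal (sSup (f '' D)) +
          ENNReal.ofReal (C * (diam D + Λ * ε)) *
            ENNReal.ofReal ((∫ y in D, f y ^ N) ^ ((1 : ℝ) / N)) := by
  have finrank_eq : Module.finrank ℝ (EuclideanSpace ℝ (Fin N)) = N := finrank_euclideanSpace_fin
  have : Nontrivial (EuclideanSpace ℝ (Fin N)) :=
    Module.nontrivial_of_finrank_pos (R := ℝ) (finrank_eq.symm ▸ hN)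
  refine ⟨abpConst (E := EuclideanSpace ℝ (Fin N)) volume, abpConst_pos volume, ?_⟩
  intro Λ β ε hΛ hβ hε ν hν hνΛ hν_symm _ D hD _ hDb x₀ _ f hf hfb hf0 hfD Ωhat _ μ _ 𝔉 X hX _
    h_step
  have estimate := eps_ABP_measurable_general volume hΛ ⟨hβ.1.le, hβ.2⟩ hε hν hνΛ
    (fun x => integral_id_eq_zero_of_measure_neg_eq (hν_symm x)) hD.measurableSet hDb hf hfb hf0 hfD
    hX h_step
  rwa [finrank_eq, ← one_div] at estimate
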